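/- For every k > 0 and every γ > 0 there exists a function β : [0, ∞) → ℝ such that: (1) β is C^∞, non-increasing, and satisfies −k ≤ β'(t)·t ≤ 0 for all t ≥ 0; (2) β is supported in [0, k], i.e. β(t) = 0 for all t ≥ k; (3) β(0) = e^γ − 1 > 0. -/

import Mathlib

theorem expNegInvGlue_mono_aux : Monotone expNegInvGlue := by
  intro x y hxy
  rcases le_or_gt x 0 with hx | hx
  · rw [expNegInvGlue.zero_of_nonpos hx]
    exact expNegInvGlue.nonneg y
  · have hy : 0 < y := lt_of_lt_of_le hx hxy
    simp only [expNegInvGlue, not_le.mpr hx, not_le.mpr hy, if_false]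
    apply Real.exp_le_exp.mpr
    have := inv_anti₀ hx hxy
    linarith

theorem smoothTransition_mono_aux : Monotone Real.smoothTransition := by
  intro x y hxy
  unfold Real.smoothTransition
  rw [div_le_div_iff₀ (Real.smoothTransition.pos_denom x) (Real.smoothTransition.pos_denom y)]
  have h1 := expNegInvGlue_mono_aux hxy
  have h2 : expNegInvGlue (1 - y) ≤ expNegInvGlue (1 - x) :=
    expNegInvGlue_mono_aux (by linarith)
  have h3 := mul_le_mul h1 h2 (expNegInvGlue.nonneg _) (expNegInvGlue.nonneg _)
  linarith

theorem smoothTransition_deriv_bound_aux :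
    ∃ M : ℝ, 0 < M ∧ ∀ x, deriv Real.smoothTransition x ≤ M := by
  have hc : Continuous (deriv Real.smoothTransition) :=
    (Real.smoothTransition.contDiff (n := 1)).continuous_deriv le_rfl
  obtain ⟨C, hC⟩ := (isCompact_Icc (a := (0:ℝ)) (b := 1)).exists_bound_of_continuousOn
    hc.continuousOn
  refine ⟨max C 1, by positivity, fun x => ?_⟩
  rcases lt_or_ge x 0 with hx | hx
  · have : Real.smoothTransition =ᶠ[nhds x] fun _ => (0:ℝ) := by
      filter_upwards [Iio_mem_nhds hx] with y hy
      exact Real.smoothTransition.zero_of_nonpos (le_of_lt hy)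
    rw [this.deriv_eq]; simp
  rcases lt_or_ge 1 x with hx1 | hx1
  · have : Real.smoothTransition =ᶠ[nhds x] fun _ => (1:ℝ) := by
      filter_upwards [Ioi_mem_nhds hx1] with y hy
      exact Real.smoothTransition.one_of_one_le (le_of_lt hy)
    rw [this.deriv_eq]; simp
  · exact (le_abs_self _).trans ((hC x ⟨hx, hx1⟩).trans (le_max_left _ _))

/-- bump-function sublemma: for every k > 0 and γ > 0 there is a C^∞,
non-increasing function β on [0, ∞) with −k ≤ β'(t)·t ≤ 0, supported in [0, k],
and with β(0) = e^γ − 1 > 0. -/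
theorem exists_bump (k γ : ℝ) (hk : 0 < k) (hγ : 0 < γ) :
    ∃ β : ℝ → ℝ,
      ContDiff ℝ (⊤ : ℕ∞) β ∧
      (∀ s t : ℝ, 0 ≤ s → s ≤ t → β t ≤ β s) ∧
      (∀ t : ℝ, 0 ≤ t → -k ≤ deriv β t * t ∧ deriv β t * t ≤ 0) ∧
      (∀ t : ℝ, k ≤ t → β t = 0) ∧
      β 0 = Real.exp γ - 1 ∧ 0 < Real.exp γ - 1 := by
  have hA : 0 < Real.exp γ - 1 := by
    have := Real.add_one_lt_exp hγ.ne'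
    linarith
  obtain ⟨M, hM, hMb⟩ := smoothTransition_deriv_bound_aux
  set A := Real.exp γ - 1
  obtain ⟨ε, hε, hεM⟩ : ∃ ε : ℝ, 0 < ε ∧ 2 * A * ε * M = k :=
    ⟨k / (2 * A * M), by positivity, by field_simp⟩
  obtain ⟨δ, hδ, hδk⟩ : ∃ δ : ℝ, 0 < δ ∧ Real.log δ = Real.log (k ^ 2) - 1 / ε := by
    refine ⟨Real.exp (Real.log (k ^ 2) - 1 / ε), Real.exp_pos _, Real.log_exp _⟩
  have hpos : ∀ t : ℝ, 0 < t ^ 2 + δ := fun t => by positivity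
  have hd : ∀ t : ℝ, HasDerivAt
      (fun t : ℝ => A * Real.smoothTransition (ε * (Real.log (k ^ 2 + δ) - Real.log (t ^ 2 + δ))))
      (A * (deriv Real.smoothTransition (ε * (Real.log (k ^ 2 + δ) - Real.log (t ^ 2 + δ))) *
        (ε * (-(2 * t / (t ^ 2 + δ)))))) t := by
    intro t
    have h1 : HasDerivAt (fun t : ℝ => t ^ 2 + δ) (2 * t) t := by
      simpa using (hasDerivAt_pow 2 t).add_const δ
    have h2 := ((h1.log (hpos t).ne').const_sub (Real.log (k ^ 2 + δ))).const_mul ε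
    have h3 : HasDerivAt Real.smoothTransition _
        (ε * (Real.log (k ^ 2 + δ) - Real.log (t ^ 2 + δ))) :=
      ((Real.smoothTransition.contDiff (n := 1)).differentiable
        one_ne_zero).differentiableAt.hasDerivAt
    exact (h3.comp t h2).const_mul A
  refine ⟨fun t => A * Real.smoothTransition
    (ε * (Real.log (k ^ 2 + δ) - Real.log (t ^ 2 + δ))), ?_, ?_, ?_, ?_, ?_, hA⟩
  · refine contDiff_const.mul (Real.smoothTransition.contDiff.comp
      (contDiff_const.mul (contDiff_const.sub (ContDiff.log ?_ fun t => (hpos t).ne'))))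
    fun_prop
  · intro s t hs hst
    apply mul_le_mul_of_nonneg_left _ hA.le
    apply smoothTransition_mono_aux
    apply mul_le_mul_of_nonneg_left _ hε.le
    have : Real.log (s ^ 2 + δ) ≤ Real.log (t ^ 2 + δ) :=
      Real.log_le_log (hpos s) (by gcongr)
    linarith
  · intro t ht
    rw [(hd t).deriv]
    set D := deriv Real.smoothTransition (ε * (Real.log (k ^ 2 + δ) - Real.log (t ^ 2 + δ))) with hD
    have hD0 : 0 ≤ D := smoothTransition_mono_aux.deriv_nonneg
    have hDM : D ≤ M := hMb _
    have hq0 : 0 ≤ t ^ 2 / (t ^ 2 + δ) := div_nonneg (sq_nonneg _) (hpos t).le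
    have hq1 : t ^ 2 / (t ^ 2 + δ) ≤ 1 := (div_le_one (hpos t)).mpr (by linarith)
    have e : A * (D * (ε * (-(2 * t / (t ^ 2 + δ))))) * t
        = -(2 * A * ε * (D * (t ^ 2 / (t ^ 2 + δ)))) := by ring
    rw [e]
    have h5 : D * (t ^ 2 / (t ^ 2 + δ)) ≤ M := by
      calc _ ≤ M * 1 := mul_le_mul hDM hq1 hq0 hM.le
        _ = M := mul_one M
    have h6 : 2 * A * ε * (D * (t ^ 2 / (t ^ 2 + δ))) ≤ 2 * A * ε * M :=
      mul_le_mul_of_nonneg_left h5 (by positivity)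
    have h7 : 0 ≤ 2 * A * ε * (D * (t ^ 2 / (t ^ 2 + δ))) := by positivity
    constructor <;> linarith
  · intro t ht
    have : Real.log (k ^ 2 + δ) ≤ Real.log (t ^ 2 + δ) :=
      Real.log_le_log (hpos k) (by gcongr)
    show A * _ = 0
    rw [Real.smoothTransition.zero_of_nonpos, mul_zero]
    exact mul_nonpos_of_nonneg_of_nonpos hε.le (by linarith)
  · show A * _ = A
    rw [Real.smoothTransition.one_of_one_le, mul_one]
    have h : Real.log (k ^ 2) ≤ Real.log (k ^ 2 + δ) :=
      Real.log_le_log (by positivity) (by linarith)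
    have h0 : Real.log ((0:ℝ) ^ 2 + δ) = Real.log (k ^ 2) - 1 / ε := by
      rw [← hδk]; norm_num
    rw [h0]
    calc (1:ℝ) = ε * (1 / ε) := by field_simp
      _ ≤ _ := mul_le_mul_of_nonneg_left (by linarith) hε.le
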